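/- arXiv:2406.07718 — 2 statements merged into one kernel-verified Lean document; each statement's English description precedes it below -/
import Mathlib

section
/- Let a_1, ..., a_r ∈ ℝ be such that every nonzero integer combination ∑_k h_k a_k is irrational, and let p be a prime. Then there exists m such that for all β, γ ∈ ℝ, the sequence z_j = ((a_1 y_j)/p, ..., (a_r y_j)/p) mod 1, with y_j = j^2 + βj + γ, j = 1, ..., m, has discrepancy D_m(Z) < 1/p^r; consequently some z_j lies in [0, 1/p)^r, i.e., for some j ∈ [1, m], the fractional part of a_k y_j / p lies in [0, 1/p) for all k = 1, ..., r. -/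
open Classical in
/-- The box discrepancy of a finite sequence in the torus (ℝ/ℤ)^r, with torus points
represented by real vectors taken mod 1. -/
noncomputable def discrepancy (m r : ℕ) (z : Fin m → Fin r → ℝ) : ℝ :=
  sSup { d : ℝ | ∃ a b : Fin r → ℝ,
    (∀ i, 0 ≤ a i ∧ a i ≤ b i ∧ b i ≤ 1) ∧
    d = |((Finset.univ.filter fun j : Fin m =>
            ∀ i, a i ≤ Int.fract (z j i) ∧ Int.fract (z j i) < b i).card : ℝ) / m
          - ∏ i, (b i - a i)| }

/-!
Divided by `m`, the Weyl sums of the points `z_j` tend to `0` by van der Corput's inequality: the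
correlation of a quadratic phase with a shift of itself is a geometric sum whose ratio does not
depend on `β` and `γ`. By Fourier approximation on the torus the empirical measures then converge
weakly to Lebesgue measure, hence on every box, whose boundary is null. The measure of a box is
monotone in its corners and its limit is continuous in them, so the convergence is uniform over all
boxes: the discrepancy tends to `0`. The limits are taken along a filter on an index set which may
contain the lower-order coefficients, and this is how uniformity in `β` and `γ` is obtained.
-/

open Filter MeasureTheory Asymptotics
open scoped Topology FourierTransform ENNReal Finset

section WeylSums

open Finset

lemma norm_sum_range_sub_sum_range_add_le {E : Type*} [SeminormedAddCommGroup E] {u : ℕ → E}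
    {C : ℝ} (hu : ∀ j, ‖u j‖ ≤ C) (m h : ℕ) :
    ‖∑ j ∈ range m, u j - ∑ j ∈ range m, u (j + h)‖ ≤ 2 * h * C := by
  have swap_ends : ∑ j ∈ range m, u j - ∑ j ∈ range m, u (j + h)
      = ∑ j ∈ range h, u j - ∑ j ∈ range h, u (m + j) := by
    rw [sub_eq_sub_iff_add_eq_add, ← sum_range_add, add_comm m h, sum_range_add]
    simp only [add_comm h]
  have short_sum (v : ℕ → E) (hv : ∀ j, ‖v j‖ ≤ C) : ‖∑ j ∈ range h, v j‖ ≤ h * C := by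
    simpa using norm_sum_le_of_le (range h) fun j _ ↦ hv j
  calc ‖∑ j ∈ range m, u j - ∑ j ∈ range m, u (j + h)‖
      ≤ h * C + h * C := by
        rw [swap_ends]
        exact norm_sub_le_of_le (short_sum u hu) (short_sum _ fun j ↦ hu (m + j))
    _ = 2 * h * C := by ring

lemma norm_card_smul_sum_sub_sum_sum_add_le {E : Type*} [SeminormedAddCommGroup E] {u : ℕ → E}
    {C : ℝ} (hu : ∀ j, ‖u j‖ ≤ C) (m H : ℕ) :
    ‖H • ∑ j ∈ range m, u j - ∑ j ∈ range m, ∑ h ∈ range H, u (j + h)‖ ≤ 2 * H ^ 2 * C := by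
  have hC : 0 ≤ C := (norm_nonneg _).trans (hu 0)
  have sum_shifts : H • ∑ j ∈ range m, u j - ∑ j ∈ range m, ∑ h ∈ range H, u (j + h)
      = ∑ h ∈ range H, (∑ j ∈ range m, u j - ∑ j ∈ range m, u (j + h)) := by
    rw [sum_sub_distrib, sum_const, card_range, sum_comm]
  calc ‖H • ∑ j ∈ range m, u j - ∑ j ∈ range m, ∑ h ∈ range H, u (j + h)‖
      ≤ ∑ _h ∈ range H, 2 * H * C := by
        rw [sum_shifts]
        refine norm_sum_le_of_le _ fun h hh ↦
          (norm_sum_range_sub_sum_range_add_le hu m h).trans ?_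
        have : h ≤ H := (mem_range.1 hh).le
        gcongr
    _ = 2 * H ^ 2 * C := by
        rw [sum_const, card_range, nsmul_eq_mul]
        ring

variable {𝕜 E : Type*} [RCLike 𝕜] [SeminormedAddCommGroup E] [InnerProductSpace 𝕜 E]

variable (𝕜) in
lemma norm_sum_sum_sq_le {κ κ' : Type*} (s : Finset κ) (t : Finset κ') (v : κ → κ' → E) :
    ‖∑ j ∈ s, ∑ h ∈ t, v j h‖ ^ 2
      ≤ #s * ∑ h ∈ t, ∑ h' ∈ t, ‖∑ j ∈ s, inner 𝕜 (v j h) (v j h')‖ := by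
  have expand : ((∑ j ∈ s, ‖∑ h ∈ t, v j h‖ ^ 2 : ℝ) : 𝕜)
      = ∑ h ∈ t, ∑ h' ∈ t, ∑ j ∈ s, inner 𝕜 (v j h) (v j h') := by
    push_cast
    simp_rw [← inner_self_eq_norm_sq_to_K, sum_inner, inner_sum]
    rw [sum_comm]
    exact sum_congr rfl fun h _ ↦ sum_comm
  calc ‖∑ j ∈ s, ∑ h ∈ t, v j h‖ ^ 2
      ≤ (∑ j ∈ s, ‖∑ h ∈ t, v j h‖) ^ 2 := by
        gcongr
        exact norm_sum_le _ _
    _ ≤ #s * ∑ j ∈ s, ‖∑ h ∈ t, v j h‖ ^ 2 := sq_sum_le_card_mul_sum_sq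
    _ = #s * ‖((∑ j ∈ s, ‖∑ h ∈ t, v j h‖ ^ 2 : ℝ) : 𝕜)‖ := by
        rw [RCLike.norm_ofReal, abs_of_nonneg (by positivity)]
    _ ≤ #s * ∑ h ∈ t, ∑ h' ∈ t, ‖∑ j ∈ s, inner 𝕜 (v j h) (v j h')‖ := by
        rw [expand]
        gcongr
        exact norm_sum_le_of_le _ fun h _ ↦ norm_sum_le _ _

variable (𝕜) in
theorem van_der_corput_inequality {u : ℕ → E} (hu : ∀ j, ‖u j‖ ≤ 1) (m H : ℕ) :
    H * ‖∑ j ∈ range m, u j‖ ≤ 2 * H ^ 2 +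
      √(m * ∑ h ∈ range H, ∑ h' ∈ range H, ‖∑ j ∈ range m, inner 𝕜 (u (j + h)) (u (j + h'))‖) :=
  calc H * ‖∑ j ∈ range m, u j‖
      = ‖(H • ∑ j ∈ range m, u j - ∑ j ∈ range m, ∑ h ∈ range H, u (j + h))
          + ∑ j ∈ range m, ∑ h ∈ range H, u (j + h)‖ := by
        rw [sub_add_cancel, ← Nat.cast_smul_eq_nsmul 𝕜, norm_smul, RCLike.norm_natCast]
    _ ≤ _ := by
        refine norm_add_le_of_le ?_ (Real.le_sqrt_of_sq_le ?_)
        · simpa using norm_card_smul_sum_sub_sum_sum_add_le hu m H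
        · simpa using norm_sum_sum_sq_le 𝕜 (range m) (range H) fun j h ↦ u (j + h)

variable (𝕜) in
lemma sum_norm_correlations_le {u : ℕ → E} (hu : ∀ j, ‖u j‖ ≤ 1) {m H : ℕ} (hH : (0 : ℝ) < H)
    (hcorr : ∀ h ∈ range H, ∀ h' ∈ range H, h ≠ h' →
      ‖∑ j ∈ range m, inner 𝕜 (u (j + h)) (u (j + h'))‖ ≤ m / H) :
    ∑ h ∈ range H, ∑ h' ∈ range H, ‖∑ j ∈ range m, inner 𝕜 (u (j + h)) (u (j + h'))‖
      ≤ 2 * H * m := by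
  have diagonal (h : ℕ) : ‖∑ j ∈ range m, inner 𝕜 (u (j + h)) (u (j + h))‖ ≤ m := by
    have := norm_sum_le_of_le (range m) fun j _ ↦ (norm_inner_le_norm (𝕜 := 𝕜) _ _).trans
      (mul_le_one₀ (hu (j + h)) (norm_nonneg _) (hu (j + h)))
    rwa [sum_const, card_range, nsmul_one] at this
  calc ∑ h ∈ range H, ∑ h' ∈ range H, ‖∑ j ∈ range m, inner 𝕜 (u (j + h)) (u (j + h'))‖
      ≤ ∑ h ∈ range H, ∑ h' ∈ range H, ((if h = h' then (m : ℝ) else 0) + m / H) := by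
        gcongr with h hh h' hh'
        split_ifs with heq
        · exact heq ▸ (diagonal h).trans (le_add_of_nonneg_right (by positivity))
        · rw [zero_add]
          exact hcorr h hh h' hh' heq
    _ = ∑ _h ∈ range H, ((m : ℝ) + m) := by
        refine sum_congr rfl fun h hh ↦ ?_
        rw [sum_add_distrib, sum_ite_eq, if_pos hh, sum_const, card_range, nsmul_eq_mul,
          mul_div_cancel₀ _ hH.ne']
    _ = 2 * H * m := by
        rw [sum_const, card_range, nsmul_eq_mul]
        ring

/-- The index `i` carries both the length `m i` and the sequence `u i`, so that the conclusion is
uniform over families of sequences. -/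
theorem isLittleO_sum_of_correlations {ι : Type*} {L : Filter ι} {m : ι → ℕ}
    (hm : Tendsto m L atTop) {u : ι → ℕ → E} (hu : ∀ i j, ‖u i j‖ ≤ 1)
    (hcorr : ∀ h h', h ≠ h' →
      (fun i ↦ ∑ j ∈ range (m i), inner 𝕜 (u i (j + h)) (u i (j + h'))) =o[L] fun i ↦ (m i : ℝ)) :
    (fun i ↦ ∑ j ∈ range (m i), u i j) =o[L] fun i ↦ (m i : ℝ) := by
  refine isLittleO_iff.2 fun c hc ↦ ?_
  obtain ⟨H, hH⟩ := exists_nat_gt (8 / c ^ 2)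
  have H_pos : (0 : ℝ) < H := lt_of_le_of_lt (by positivity) hH
  have off_diagonal : ∀ᶠ i in L, ∀ h ∈ range H, ∀ h' ∈ range H, h ≠ h' →
      ‖∑ j ∈ range (m i), inner 𝕜 (u i (j + h)) (u i (j + h'))‖ ≤ m i / H := by
    simp only [eventually_all_finset, eventually_imp_distrib_left]
    intro h _ h' _ hne
    filter_upwards [isLittleO_iff.1 (hcorr h h' hne) (inv_pos.2 H_pos)] with i hi
    simpa [div_eq_inv_mul] using hi
  filter_upwards [off_diagonal, (tendsto_natCast_atTop_atTop (R := ℝ)).comp hm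
    |>.eventually_ge_atTop (4 * H / c)] with i hoff hlarge
  have correlations := sum_norm_correlations_le 𝕜 (hu i) H_pos hoff
  have sqrt_le : √(m i * (2 * H * m i)) ≤ H * c * m i / 2 := by
    refine Real.sqrt_le_iff.2 ⟨by positivity, ?_⟩
    have : 8 ≤ H * c ^ 2 := ((div_lt_iff₀ (by positivity)).1 hH).le
    nlinarith [mul_le_mul_of_nonneg_right this (by positivity : 0 ≤ H * (m i : ℝ) ^ 2)]
  have boundary_le : 2 * (H : ℝ) ^ 2 ≤ H * c * m i / 2 := by
    have : 4 * H ≤ m i * c := (div_le_iff₀ hc).1 hlarge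
    nlinarith
  have scaled : H * ‖∑ j ∈ range (m i), u i j‖ ≤ H * (c * m i) := calc
    _ ≤ 2 * (H : ℝ) ^ 2 + √(m i * (2 * H * m i)) :=
      (van_der_corput_inequality 𝕜 (hu i) (m i) H).trans (by gcongr)
    _ ≤ H * (c * m i) := by linarith
  simpa using le_of_mul_le_mul_left scaled H_pos

lemma fourierChar_ne_one_of_irrational {θ : ℝ} (hθ : Irrational θ) : (𝐞 θ : ℂ) ≠ 1 := by
  rw [Real.fourierChar_apply, Ne, Complex.exp_eq_one_iff]
  rintro ⟨n, hn⟩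
  push_cast at hn
  have : (θ : ℂ) = n := mul_left_cancel₀ Complex.two_pi_I_ne_zero (by linear_combination hn)
  exact hθ ⟨n, by exact_mod_cast this.symm⟩

lemma norm_sum_fourierChar_linear_le {θ : ℝ} (hθ : (𝐞 θ : ℂ) ≠ 1) (c : ℝ) (m : ℕ) :
    ‖∑ j ∈ range m, (𝐞 (θ * j + c) : ℂ)‖ ≤ 2 / ‖(𝐞 θ : ℂ) - 1‖ := by
  have geometric (j : ℕ) : (𝐞 (θ * j + c) : ℂ) = (𝐞 θ : ℂ) ^ j * 𝐞 c := by
    rw [AddChar.map_add_eq_mul, mul_comm θ, ← nsmul_eq_mul, AddChar.map_nsmul_eq_pow]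
    push_cast
    rfl
  simp_rw [geometric, ← sum_mul, geom_sum_eq hθ, norm_mul, norm_div, Circle.norm_coe, mul_one]
  gcongr
  calc ‖(𝐞 θ : ℂ) ^ m - 1‖ ≤ ‖(𝐞 θ : ℂ) ^ m‖ + ‖(1 : ℂ)‖ := norm_sub_le _ _
    _ = 2 := by
      rw [norm_pow, Circle.norm_coe, one_pow, norm_one]
      norm_num

theorem isLittleO_sum_fourierChar_quadratic {ι : Type*} {L : Filter ι} {m : ι → ℕ}
    (hm : Tendsto m L atTop) {α : ℝ} (hα : Irrational α) (β γ : ι → ℝ) :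
    (fun i ↦ ∑ j ∈ range (m i), (𝐞 (α * j ^ 2 + β i * j + γ i) : ℂ))
      =o[L] fun i ↦ (m i : ℝ) := by
  refine isLittleO_sum_of_correlations (𝕜 := ℂ) hm
    (u := fun i j ↦ (𝐞 (α * j ^ 2 + β i * j + γ i) : ℂ)) (fun i j ↦ (Circle.norm_coe _).le)
    fun h h' hne ↦ ?_
  let slope : ℝ := (2 * (h' - h) : ℤ) * α
  let const (i : ι) : ℝ := α * (h' ^ 2 - h ^ 2) + β i * (h' - h)
  have correlation_eq (i : ι) (j : ℕ) :
      inner ℂ (𝐞 (α * ↑(j + h) ^ 2 + β i * ↑(j + h) + γ i) : ℂ)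
        (𝐞 (α * ↑(j + h') ^ 2 + β i * ↑(j + h') + γ i) : ℂ) = 𝐞 (slope * j + const i) := by
    rw [RCLike.inner_apply, ← Circle.coe_inv_eq_conj, ← AddChar.map_neg_eq_inv, ← Circle.coe_mul,
      ← AddChar.map_add_eq_mul]
    congr 2
    simp only [slope, const]
    push_cast
    ring
  have slope_irrational : Irrational slope := hα.intCast_mul (by omega)
  simp_rw [correlation_eq]
  have m_atTop : Tendsto (fun i ↦ ‖(m i : ℝ)‖) L atTop :=
    tendsto_norm_atTop_atTop.comp (tendsto_natCast_atTop_atTop.comp hm)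
  calc (fun i ↦ ∑ j ∈ range (m i), (𝐞 (slope * j + const i) : ℂ))
      =O[L] fun _ ↦ 2 / ‖(𝐞 slope : ℂ) - 1‖ :=
        .of_norm_le fun i ↦ norm_sum_fourierChar_linear_le
          (fourierChar_ne_one_of_irrational slope_irrational) (const i) (m i)
    _ =o[L] fun i ↦ (m i : ℝ) := isLittleO_const_left.2 (.inr m_atTop)

end WeylSums

open Set

theorem tendstoLocallyUniformly_of_monotone {ι κ : Type*} [Finite κ] {L : Filter ι}
    {F : ι → (κ → ℝ) → ℝ} {f : (κ → ℝ) → ℝ} (hF : ∀ i, Monotone (F i)) (hf : Continuous f)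
    (h : ∀ x, Tendsto (F · x) L (𝓝 (f x))) : TendstoLocallyUniformly F f L := by
  cases nonempty_fintype κ
  refine Metric.tendstoLocallyUniformly_iff.2 fun ε hε x ↦ ?_
  obtain ⟨δ, hδ, hfδ⟩ := Metric.nhds_basis_closedBall.eventually_iff.1
    (hf.continuousAt.eventually (Metric.ball_mem_nhds (f x) (half_pos (half_pos hε))))
  have corner (s : ℝ) (hs : |s| ≤ δ) : ∀ᶠ i in L, |F i (fun k ↦ x k + s) - f x| < ε / 2 := by
    have f_near : |f (fun k ↦ x k + s) - f x| < ε / 2 / 2 :=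
      hfδ <| (dist_pi_le_iff hδ.le).2 fun k ↦ by rwa [Real.dist_eq, add_sub_cancel_left]
    filter_upwards [Metric.tendsto_nhds.1 (h fun k ↦ x k + s) (ε / 2 / 2) (half_pos (half_pos hε))]
      with i F_near
    rw [Real.dist_eq] at F_near
    grind
  refine ⟨Metric.closedBall x δ, Metric.closedBall_mem_nhds x hδ, ?_⟩
  filter_upwards [corner (-δ) (by simp [abs_of_pos hδ]), corner δ (by simp [abs_of_pos hδ])]
    with i lower upper y hy
  have near (k : κ) : |y k - x k| ≤ δ := (dist_pi_le_iff hδ.le).1 hy k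
  have F_lower : F i (fun k ↦ x k + -δ) ≤ F i y :=
    hF i fun k ↦ by linarith [neg_le_of_abs_le (near k)]
  have F_upper : F i y ≤ F i fun k ↦ x k + δ :=
    hF i fun k ↦ by linarith [le_of_abs_le (near k)]
  have f_near : |f y - f x| < ε / 2 / 2 := hfδ hy
  rw [Real.dist_eq]
  grind

section Torus

instance : IsProbabilityMeasure (volume : Measure UnitAddCircle) := ⟨UnitAddCircle.measure_univ⟩

variable {d : Type*} [Fintype d]

lemma mFourier_coe (n : d → ℤ) (x : d → ℝ) :
    UnitAddTorus.mFourier n (fun k ↦ (x k : UnitAddCircle)) = 𝐞 (∑ k, n k * x k) := by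
  rw [Real.fourierChar_apply]
  simp only [UnitAddTorus.mFourier, ContinuousMap.coe_mk, fourier_coe_apply, ← Complex.exp_sum]
  congr 1
  push_cast
  simp only [Finset.mul_sum, Finset.sum_mul]
  refine Finset.sum_congr rfl fun k _ ↦ ?_
  ring

lemma integral_fourier_of_ne_zero {n : ℤ} (hn : n ≠ 0) :
    ∫ x : UnitAddCircle, fourier n x = 0 :=
  integral_eq_zero_of_add_right_eq_neg (fourier_add_half_inv_index hn one_pos)

lemma integral_mFourier_of_ne_zero {n : d → ℤ} (hn : n ≠ 0) :
    ∫ x : UnitAddTorus d, UnitAddTorus.mFourier n x = 0 := by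
  obtain ⟨k, hk⟩ := Function.ne_iff.1 hn
  exact (integral_fintype_prod_volume_eq_prod fun k (x : UnitAddCircle) ↦ fourier (n k) x).trans <|
    Finset.prod_eq_zero (Finset.mem_univ k) (integral_fourier_of_ne_zero hk)

theorem tendsto_of_tendsto_integral_mFourier {ι : Type*} {L : Filter ι}
    {μ : ι → ProbabilityMeasure (UnitAddTorus d)} {ν : ProbabilityMeasure (UnitAddTorus d)}
    (h : ∀ n, Tendsto (fun i ↦ ∫ x, UnitAddTorus.mFourier n x ∂(μ i : Measure (UnitAddTorus d))) L
      (𝓝 (∫ x, UnitAddTorus.mFourier n x ∂(ν : Measure (UnitAddTorus d))))) :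
    Tendsto μ L (𝓝 ν) := by
  let integral (ρ : ProbabilityMeasure (UnitAddTorus d)) (f : C(UnitAddTorus d, ℂ)) : ℂ :=
    ∫ x, f x ∂(ρ : Measure (UnitAddTorus d))
  have integrable (f : C(UnitAddTorus d, ℂ)) (ρ : ProbabilityMeasure (UnitAddTorus d)) :
      Integrable f (ρ : Measure (UnitAddTorus d)) :=
    f.continuous.integrable_of_hasCompactSupport (.of_compactSpace _)
  have lipschitz (ρ : ProbabilityMeasure (UnitAddTorus d)) : LipschitzWith 1 (integral ρ) := by
    refine .of_dist_le_mul fun f g ↦ ?_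
    rw [dist_eq_norm, dist_eq_norm, ← integral_sub (integrable f ρ) (integrable g ρ)]
    simpa using norm_integral_le_of_norm_le_const (μ := (ρ : Measure (UnitAddTorus d)))
      (.of_forall fun x ↦ (f - g).norm_coe_le_norm x)
  have closed : IsClosed {f | Tendsto (fun i ↦ integral (μ i) f) L (𝓝 (integral ν f))} :=
    (LipschitzWith.uniformEquicontinuous _ 1 fun i ↦ lipschitz (μ i)).equicontinuous
      |>.isClosed_setOfPred_tendsto (lipschitz ν).continuous
  have span_le : ∀ f ∈ Submodule.span ℂ (range (UnitAddTorus.mFourier (d := d))),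
      Tendsto (fun i ↦ integral (μ i) f) L (𝓝 (integral ν f)) := by
    intro f hf
    induction hf using Submodule.span_induction with
    | mem f hf =>
      obtain ⟨n, rfl⟩ := hf
      exact h n
    | zero => simpa [integral] using tendsto_const_nhds
    | add f g _ _ hf hg =>
      simpa [integral, integral_add (integrable f _) (integrable g _)] using hf.add hg
    | smul c f _ hf => simpa [integral, integral_const_mul] using hf.const_mul c
  refine (ProbabilityMeasure.tendsto_iff_forall_integral_rclike_tendsto ℂ).2 fun f ↦
    closure_minimal span_le closed (a := f.toContinuousMap) ?_
  rw [← Submodule.topologicalClosure_coe, UnitAddTorus.span_mFourier_closure_eq_top]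
  trivial

instance : NullSingletonClass (volume : Measure UnitAddCircle) where
  measure_singleton x := by simpa using AddCircle.volume_closedBall (T := 1) (x := x) 0

/-- The half-open arc of the unit circle that is the projection of `[a, b)`. -/
def arc (a b : ℝ) : Set UnitAddCircle := (↑) '' Ico a b

lemma coe_mem_arc_iff {a b x : ℝ} (ha : 0 ≤ a) (hb : b ≤ 1) :
    (x : UnitAddCircle) ∈ arc a b ↔ Int.fract x ∈ Ico a b := by
  refine ⟨?_, fun hx ↦ ⟨Int.fract x, hx, AddCircle.coe_fract x⟩⟩
  rintro ⟨y, hy, hyx⟩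
  have hy_unit : y ∈ Ico (0 : ℝ) (0 + 1) := ⟨ha.trans hy.1, by linarith [hy.2]⟩
  have hx_unit : Int.fract x ∈ Ico (0 : ℝ) (0 + 1) :=
    ⟨Int.fract_nonneg x, by linarith [Int.fract_lt_one x]⟩
  rw [← AddCircle.coe_fract x] at hyx
  exact (AddCircle.coe_eq_coe_iff_of_mem_Ico (p := 1) hy_unit hx_unit).1 hyx ▸ hy

lemma isOpen_image_Ioo (a b : ℝ) : IsOpen ((↑) '' Ioo a b : Set UnitAddCircle) :=
  QuotientAddGroup.isOpenMap_coe _ isOpen_Ioo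

lemma closure_arc_subset (a b : ℝ) : closure (arc a b) ⊆ (↑) '' Icc a b :=
  closure_minimal (image_mono Ico_subset_Icc_self)
    (isCompact_Icc.image (AddCircle.continuous_mk' 1)).isClosed

lemma subset_interior_arc (a b : ℝ) : (↑) '' Ioo a b ⊆ interior (arc a b) :=
  interior_maximal (image_mono Ioo_subset_Ico_self) (isOpen_image_Ioo a b)

lemma image_Icc_ae_le_image_Ioo (a b : ℝ) :
    ((↑) '' Icc a b : Set UnitAddCircle) ≤ᵐ[volume] (↑) '' Ioo a b := by
  have sdiff_subset : ((↑) '' Icc a b \ (↑) '' Ioo a b : Set UnitAddCircle) ⊆ {↑a, ↑b} := by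
    rintro _ ⟨⟨x, hx, rfl⟩, hx'⟩
    have : x ∉ Ioo a b := fun h ↦ hx' (mem_image_of_mem _ h)
    obtain rfl | rfl : x = a ∨ x = b := by grind
    · exact .inl rfl
    · exact .inr rfl
  exact ae_le_set.2 (((toFinite _).subset sdiff_subset).measure_zero _)

lemma closure_arc_ae_le_interior_arc (a b : ℝ) :
    closure (arc a b) ≤ᵐ[volume] interior (arc a b) :=
  (closure_arc_subset a b).eventuallyLE.trans <|
    (image_Icc_ae_le_image_Ioo a b).trans (subset_interior_arc a b).eventuallyLE

lemma volume_image_Ioo {a b : ℝ} (hab : b ≤ a + 1) :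
    volume ((↑) '' Ioo a b : Set UnitAddCircle) = ENNReal.ofReal (b - a) := by
  rw [AddCircle.add_projection_respects_measure 1 a (isOpen_image_Ioo a b).measurableSet,
    ← Real.volume_Ioo]
  congr 1
  ext x
  constructor
  · rintro ⟨⟨y, hy, hyx⟩, hx⟩
    have := (AddCircle.coe_eq_coe_iff_of_mem_Ioc (p := 1) ⟨hy.1, hy.2.le.trans hab⟩ hx).1 hyx
    exact this ▸ hy
  · exact fun hx ↦ ⟨mem_image_of_mem _ hx, hx.1, hx.2.le.trans hab⟩

lemma volume_real_arc (a b : ℝ) : volume.real (arc a b) = max 0 (min 1 (b - a)) := by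
  rcases le_total b (a + 1) with hab | hab
  · have : arc a b =ᵐ[volume] (↑) '' Ioo a b :=
      ((image_mono Ico_subset_Icc_self).eventuallyLE.trans
        (image_Icc_ae_le_image_Ioo a b)).antisymm (image_mono Ioo_subset_Ico_self).eventuallyLE
    rw [measureReal_congr this, measureReal_def, volume_image_Ioo hab, ENNReal.toReal_ofReal']
    grind
  · have : arc a b = univ := univ_subset_iff.1 <|
      (AddCircle.coe_image_Ico_eq 1 a).ge.trans (image_mono (Ico_subset_Ico_right hab))
    rw [this, probReal_univ]
    grind

/-- The half-open box of the unit torus with edges `[a k, b k)`, taken modulo `1`: the test sets of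
the discrepancy. -/
def torusBox (a b : d → ℝ) : Set (UnitAddTorus d) := univ.pi fun k ↦ arc (a k) (b k)

lemma volume_real_torusBox (a b : d → ℝ) :
    volume.real (torusBox a b) = ∏ k, max 0 (min 1 (b k - a k)) := by
  simp_rw [torusBox, measureReal_def, volume_pi_pi, ENNReal.toReal_prod, ← volume_real_arc,
    measureReal_def]

lemma volume_frontier_torusBox (a b : d → ℝ) : volume (frontier (torusBox a b)) = 0 := by
  rw [frontier, ← ae_le_set, torusBox, closure_pi_set, interior_pi_set univ.toFinite]
  exact Measure.ae_le_set_pi fun k _ ↦ closure_arc_ae_le_interior_arc (a k) (b k)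

omit [Fintype d] in
lemma torusBox_mono {a a' b b' : d → ℝ} (ha : a' ≤ a) (hb : b ≤ b') :
    torusBox a b ⊆ torusBox a' b' :=
  pi_mono fun k _ ↦ image_mono (Ico_subset_Ico (ha k) (hb k))

section Convergence

variable {ι : Type*} {L : Filter ι} {μ : ι → ProbabilityMeasure (UnitAddTorus d)}

lemma tendsto_real_torusBox (hμ : Tendsto μ L (𝓝 ⟨volume, inferInstance⟩)) (a b : d → ℝ) :
    Tendsto (fun i ↦ (μ i : Measure (UnitAddTorus d)).real (torusBox a b)) L
      (𝓝 (∏ k, max 0 (min 1 (b k - a k)))) := by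
  rw [← volume_real_torusBox]
  exact (ENNReal.tendsto_toReal (measure_ne_top _ _)).comp <|
    ProbabilityMeasure.tendsto_measure_of_null_frontier_of_tendsto' hμ
      (volume_frontier_torusBox a b)

/-- A box is recorded by the vector `(-a, b)`, in which it is monotone. -/
theorem tendstoLocallyUniformly_real_torusBox (hμ : Tendsto μ L (𝓝 ⟨volume, inferInstance⟩)) :
    TendstoLocallyUniformly
      (fun i (q : d ⊕ d → ℝ) ↦ (μ i : Measure (UnitAddTorus d)).real
        (torusBox (fun k ↦ -q (.inl k)) fun k ↦ q (.inr k)))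
      (fun q ↦ ∏ k, max 0 (min 1 (q (.inr k) + q (.inl k)))) L := by
  refine tendstoLocallyUniformly_of_monotone ?_ (by fun_prop) ?_
  · exact fun i q q' hq ↦ measureReal_mono
      (torusBox_mono (fun k ↦ neg_le_neg (hq (.inl k))) fun k ↦ hq (.inr k))
  · intro q
    simpa only [sub_neg_eq_add] using
      tendsto_real_torusBox hμ (fun k ↦ -q (.inl k)) fun k ↦ q (.inr k)

theorem eventually_forall_abs_real_torusBox_sub_lt (hμ : Tendsto μ L (𝓝 ⟨volume, inferInstance⟩))
    {ε : ℝ} (hε : 0 < ε) :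
    ∀ᶠ i in L, ∀ a b : d → ℝ, (∀ k, 0 ≤ a k ∧ a k ≤ b k ∧ b k ≤ 1) →
      |(μ i : Measure (UnitAddTorus d)).real (torusBox a b) - ∏ k, (b k - a k)| < ε := by
  have uniform := (tendstoLocallyUniformlyOn_iff_tendstoUniformlyOn_of_compact
    (isCompact_Icc (a := (-1 : d ⊕ d → ℝ)) (b := 1))).1
      (tendstoLocallyUniformly_real_torusBox hμ).tendstoLocallyUniformlyOn
  filter_upwards [Metric.tendstoUniformlyOn_iff.1 uniform ε hε] with i hi a b hab
  have mem_cube : Sum.elim (-a) b ∈ Icc (-1 : d ⊕ d → ℝ) 1 := by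
    refine ⟨Sum.forall.2 ⟨fun k ↦ ?_, fun k ↦ ?_⟩, Sum.forall.2 ⟨fun k ↦ ?_, fun k ↦ ?_⟩⟩ <;>
      simp only [Sum.elim_inl, Sum.elim_inr, Pi.neg_apply, Pi.one_apply] <;>
      linarith [hab k]
  have volume_box : ∏ k, max 0 (min 1 (b k + -a k)) = ∏ k, (b k - a k) :=
    Finset.prod_congr rfl fun k _ ↦ by grind
  have close := hi _ mem_cube
  simp only [Sum.elim_inl, Sum.elim_inr, Pi.neg_apply, neg_neg, volume_box] at close
  rwa [dist_comm] at close

end Convergence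

end Torus

section Empirical

variable {X κ : Type*} [MeasurableSpace X] [Fintype κ] [Nonempty κ]

/-- The empirical measure of a finite family of points, giving mass `1 / card κ` to each `z k`. -/
noncomputable def empiricalMeasure (z : κ → X) : ProbabilityMeasure X :=
  ⟨(Fintype.card κ : ℝ≥0∞)⁻¹ • ∑ k, Measure.dirac (z k), ⟨by
    simp [Measure.finsetSum_apply, ENNReal.inv_mul_cancel]⟩⟩

variable [MeasurableSingletonClass X]

lemma integral_empiricalMeasure {E : Type*} [NormedAddCommGroup E] [NormedSpace ℝ E]
    [CompleteSpace E] (z : κ → X) (f : X → E) :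
    ∫ x, f x ∂(empiricalMeasure z : Measure X) = (Fintype.card κ : ℝ)⁻¹ • ∑ k, f (z k) := by
  change ∫ x, f x ∂((Fintype.card κ : ℝ≥0∞)⁻¹ • ∑ k, Measure.dirac (z k)) = _
  rw [integral_smul_measure,
    integral_finsetSum_measure fun k _ ↦ integrable_dirac enorm_lt_top]
  simp_rw [integral_dirac, ENNReal.toReal_inv, ENNReal.toReal_natCast]

open Classical in
lemma real_empiricalMeasure (z : κ → X) (s : Set X) :
    (empiricalMeasure z : Measure X).real s = #{k | z k ∈ s} / Fintype.card κ := by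
  change ((Fintype.card κ : ℝ≥0∞)⁻¹ • ∑ k, Measure.dirac (z k)).real s = _
  simp [measureReal_def, Measure.finsetSum_apply, indicator_apply, div_eq_inv_mul]

end Empirical

section Discrepancy

theorem exists_forall_fract_mem_Ico_of_discrepancy_lt {m r : ℕ} {z : Fin m → Fin r → ℝ}
    {a b : Fin r → ℝ} (hab : ∀ k, 0 ≤ a k ∧ a k ≤ b k ∧ b k ≤ 1)
    (h : discrepancy m r z < ∏ k, (b k - a k)) :
    ∃ j, ∀ k, Int.fract (z j k) ∈ Ico (a k) (b k) := by
  classical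
  contrapose! h
  have empty : Finset.univ.filter (fun j ↦ ∀ k, a k ≤ Int.fract (z j k) ∧ Int.fract (z j k) < b k)
      = ∅ := Finset.filter_eq_empty_iff.2 fun j _ hj ↦ (h j).elim fun k hk ↦ hk (hj k)
  refine le_csSup ⟨1, ?_⟩ ⟨a, b, hab, ?_⟩
  · rintro _ ⟨a, b, hab, rfl⟩
    refine abs_sub_le_of_nonneg_of_le (by positivity) ?_
      (Finset.prod_nonneg fun k _ ↦ by linarith [hab k])
      (Finset.prod_le_one (fun k _ ↦ by linarith [hab k]) fun k _ ↦ by linarith [hab k])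
    refine div_le_one_of_le₀ ?_ (Nat.cast_nonneg m)
    exact_mod_cast (Finset.card_le_univ _).trans_eq (Fintype.card_fin m)
  · have volume_nonneg : 0 ≤ ∏ k, (b k - a k) :=
      Finset.prod_nonneg fun k _ ↦ by linarith [hab k]
    convert (abs_of_nonneg volume_nonneg).symm using 1
    rw [← abs_neg]
    congr 1
    simp [empty]

variable {ι : Type*} {L : Filter ι} {m : ι → ℕ} {r : ℕ}

theorem tendsto_empiricalMeasure_of_isLittleO_sum_fourierChar {d : Type*} [Fintype d]
    {κ : ι → Type*} [∀ i, Fintype (κ i)] [∀ i, Nonempty (κ i)] {z : ∀ i, κ i → d → ℝ}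
    (h : ∀ n : d → ℤ, n ≠ 0 → (fun i ↦ ∑ j, (𝐞 (∑ k, n k * z i j k) : ℂ))
      =o[L] fun i ↦ (Fintype.card (κ i) : ℝ)) :
    Tendsto (fun i ↦ empiricalMeasure fun j k ↦ (z i j k : UnitAddCircle)) L
      (𝓝 (⟨volume, inferInstance⟩ : ProbabilityMeasure (UnitAddTorus d))) := by
  refine tendsto_of_tendsto_integral_mFourier fun n ↦ ?_
  rcases eq_or_ne n 0 with rfl | hn
  · simpa [UnitAddTorus.mFourier_zero] using tendsto_const_nhds
  · simp_rw [ProbabilityMeasure.coe_mk, integral_mFourier_of_ne_zero hn,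
      integral_empiricalMeasure, mFourier_coe]
    exact (h n hn).tendsto_inv_smul_nhds_zero

theorem tendsto_discrepancy_of_isLittleO_sum_fourierChar [∀ i, NeZero (m i)]
    {z : ∀ i, Fin (m i) → Fin r → ℝ}
    (h : ∀ n : Fin r → ℤ, n ≠ 0 → (fun i ↦ ∑ j, (𝐞 (∑ k, n k * z i j k) : ℂ))
      =o[L] fun i ↦ (m i : ℝ)) :
    Tendsto (fun i ↦ discrepancy (m i) r (z i)) L (𝓝 0) := by
  have equidistributed := tendsto_empiricalMeasure_of_isLittleO_sum_fourierChar
    (z := z) (L := L) (by simpa only [Fintype.card_fin] using h)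
  refine Metric.tendsto_nhds.2 fun ε hε ↦ ?_
  filter_upwards [eventually_forall_abs_real_torusBox_sub_lt equidistributed (half_pos hε)]
    with i box_close
  have nonneg : 0 ≤ discrepancy (m i) r (z i) :=
    Real.sSup_nonneg (by rintro _ ⟨a, b, -, rfl⟩; exact abs_nonneg _)
  rw [Real.dist_0_eq_abs, abs_of_nonneg nonneg]
  refine (Real.sSup_le ?_ (half_pos hε).le).trans_lt (half_lt_self hε)
  rintro _ ⟨a, b, hab, rfl⟩
  have box_iff (j : Fin (m i)) : (fun k ↦ (z i j k : UnitAddCircle)) ∈ torusBox a b ↔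
      ∀ k, a k ≤ Int.fract (z i j k) ∧ Int.fract (z i j k) < b k := by
    simp only [torusBox, mem_univ_pi]
    exact forall_congr' fun k ↦ coe_mem_arc_iff (hab k).1 (hab k).2.2
  have := (box_close a b hab).le
  rw [real_empiricalMeasure, Fintype.card_fin] at this
  simpa only [box_iff] using this

theorem tendsto_discrepancy_quadratic {a : Fin r → ℝ}
    (ha : ∀ n : Fin r → ℤ, n ≠ 0 → Irrational (∑ k, (n k : ℝ) * a k)) [∀ i, NeZero (m i)]
    (hm : Tendsto m L atTop) (b c : ι → Fin r → ℝ) :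
    Tendsto (fun i ↦ discrepancy (m i) r fun j k ↦ a k * (j : ℝ) ^ 2 + b i k * j + c i k) L
      (𝓝 0) := by
  refine tendsto_discrepancy_of_isLittleO_sum_fourierChar fun n hn ↦ ?_
  have phase (i : ι) (j : ℕ) : ∑ k, n k * (a k * (j : ℝ) ^ 2 + b i k * j + c i k)
      = (∑ k, n k * a k) * (j : ℝ) ^ 2 + (∑ k, n k * b i k) * j + ∑ k, n k * c i k := by
    simp only [Finset.sum_mul, ← Finset.sum_add_distrib]
    exact Finset.sum_congr rfl fun k _ ↦ by ring
  simp_rw [phase]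
  simpa only [Finset.sum_range] using isLittleO_sum_fourierChar_quadratic hm (ha n hn)
    (fun i ↦ ∑ k, n k * b i k) fun i ↦ ∑ k, n k * c i k

theorem eventually_forall_discrepancy_quadratic_lt {a : Fin r → ℝ}
    (ha : ∀ n : Fin r → ℤ, n ≠ 0 → Irrational (∑ k, (n k : ℝ) * a k)) {ε : ℝ} (hε : 0 < ε) :
    ∀ᶠ m in atTop, ∀ b c : Fin r → ℝ,
      discrepancy m r (fun j k ↦ a k * (j : ℝ) ^ 2 + b k * j + c k) < ε := by
  let L : Filter (ℕ × (Fin r → ℝ) × (Fin r → ℝ)) := atTop ×ˢ ⊤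
  have length_atTop : Tendsto (fun i ↦ i.1 + 1) L atTop :=
    (tendsto_add_atTop_nat 1).comp tendsto_fst
  have small := (tendsto_discrepancy_quadratic ha length_atTop (fun i ↦ i.2.1)
    fun i ↦ i.2.2).eventually_lt_const hε
  rw [← map_add_atTop_eq_nat 1, eventually_map]
  filter_upwards [mem_prod_top.1 small] with m hm b c
  exact hm (b, c)

end Discrepancy

theorem stmt_9_general (r : ℕ) (a : Fin r → ℝ)
    (ha : ∀ h : Fin r → ℤ, h ≠ 0 → Irrational (∑ k, (h k : ℝ) * a k))
    (p : ℕ) (hp : 0 < p) :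
    ∃ m : ℕ, 0 < m ∧ ∀ β γ : ℝ,
      discrepancy m r (fun j k =>
          a k * (((j : ℝ) + 1) ^ 2 + β * ((j : ℝ) + 1) + γ) / p) < 1 / (p : ℝ) ^ r ∧
      ∃ j : Fin m, ∀ k : Fin r,
        Int.fract (a k * (((j : ℝ) + 1) ^ 2 + β * ((j : ℝ) + 1) + γ) / p)
          ∈ Set.Ico 0 (1 / (p : ℝ)) := by
  have ha_div (h : Fin r → ℤ) (hh : h ≠ 0) : Irrational (∑ k, (h k : ℝ) * (a k / p)) := by
    simpa only [mul_div_assoc, Finset.sum_div] using (ha h hh).div_natCast hp.ne'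
  obtain ⟨m, small, m_pos⟩ := ((eventually_forall_discrepancy_quadratic_lt ha_div
    (ε := 1 / (p : ℝ) ^ r) (by positivity)).and (eventually_gt_atTop 0)).exists
  have discrepancy_lt (β γ : ℝ) : discrepancy m r (fun j k =>
      a k * (((j : ℝ) + 1) ^ 2 + β * ((j : ℝ) + 1) + γ) / p) < 1 / (p : ℝ) ^ r := by
    convert small (fun k ↦ a k / p * (2 + β)) (fun k ↦ a k / p * (1 + β + γ)) using 4
    ring
  refine ⟨m, m_pos, fun β γ ↦ ⟨discrepancy_lt β γ, ?_⟩⟩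
  refine exists_forall_fract_mem_Ico_of_discrepancy_lt
    (fun _ ↦ ⟨le_rfl, by positivity, by simpa using Nat.cast_inv_le_one p⟩) ?_
  simpa using discrepancy_lt β γ

/-- If every nonzero integer combination of a_1, ..., a_r is irrational and p is prime,
then there is m such that for all β, γ, the sequence z_j = (a_k y_j / p)_k mod 1,
y_j = j² + βj + γ (j = 1, ..., m), has discrepancy < 1/p^r; consequently some z_j
lies in [0, 1/p)^r. (Indices j : Fin m correspond to j+1 ∈ {1, ..., m}.) -/
theorem stmt_9 (r : ℕ) (a : Fin r → ℝ)
    (ha : ∀ h : Fin r → ℤ, h ≠ 0 → Irrational (∑ k, (h k : ℝ) * a k))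
    (p : ℕ) (hp : p.Prime) :
    ∃ m : ℕ, 0 < m ∧ ∀ β γ : ℝ,
      discrepancy m r (fun j k =>
          a k * (((j : ℝ) + 1) ^ 2 + β * ((j : ℝ) + 1) + γ) / p) < 1 / (p : ℝ) ^ r ∧
      ∃ j : Fin m, ∀ k : Fin r,
        Int.fract (a k * (((j : ℝ) + 1) ^ 2 + β * ((j : ℝ) + 1) + γ) / p)
          ∈ Set.Ico 0 (1 / (p : ℝ)) :=
  stmt_9_general r a ha p hp.pos
end

section
/- Let X ⊂ ℝ^d be a finite non-spherical set. Then there exists a natural number m and, for every n, a red/blue colouring of ℝ^n such that there is no red isometric copy of X and no blue set of m collinear points with consecutive points at unit distance. Equivalently, ℝ^n ↛ (X, ℓ_m) for all n. -/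
/-- A finite set is spherical if it embeds isometrically into a sphere of some dimension. -/
def Spherical {d : ℕ} (X : Set (EuclideanSpace ℝ (Fin d))) : Prop :=
  ∃ (N : ℕ) (f : EuclideanSpace ℝ (Fin d) → EuclideanSpace ℝ (Fin N))
    (c : EuclideanSpace ℝ (Fin N)) (ρ : ℝ),
    (∀ x ∈ X, ∀ y ∈ X, dist (f x) (f y) = dist x y) ∧ ∀ x ∈ X, dist (f x) c = ρ

/-- `IsCopy X Y`: `Y` is an isometric copy of `X`. -/
def IsCopy {d n : ℕ} (X : Set (EuclideanSpace ℝ (Fin d)))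
    (Y : Set (EuclideanSpace ℝ (Fin n))) : Prop :=
  ∃ f : EuclideanSpace ℝ (Fin d) → EuclideanSpace ℝ (Fin n),
    (∀ x ∈ X, ∀ y ∈ X, dist (f x) (f y) = dist x y) ∧ f '' X = Y

/-! A set `X` in a finite-dimensional space fails to lie on a sphere exactly when some affine
relation `∑ cᵢ = 0`, `∑ cᵢ xᵢ = 0` between its points has `b = ∑ cᵢ ‖xᵢ‖² ≠ 0`, and then
`∑ cᵢ ‖f xᵢ‖² = b` for every isometric copy `f` of `X`. Scale the relation so that `b` and all
nonzero integer combinations of the `cᵢ` are irrational, and colour `x` red when every `cᵢ ‖x‖²` is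
close to an integer. A red copy of `X` would make `b` too close to an integer. Along a line with
unit steps `‖w + j u‖² = j² + j β + γ`, so by Weyl's theorem on quadratic polynomials the sequences
`j ↦ cᵢ ‖w + j u‖²` are jointly close to integers for some `j`, and compactness of the torus of
parameters `(β, γ)` bounds `j` independently of the line and of the dimension. -/

open Filter Finset Asymptotics MeasureTheory EuclideanGeometry
open scoped InnerProductSpace Topology

section VanDerCorput

lemma isLittleO_natCast_of_norm_le {E : Type*} [SeminormedAddCommGroup E] {f : ℕ → E} {C : ℝ}
    (hf : ∀ N, ‖f N‖ ≤ C) : f =o[atTop] fun N => (N : ℝ) :=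
  (IsBigO.of_bound' (.of_forall fun N => (hf N).trans (le_abs_self C))).trans_isLittleO
    ((isLittleO_const_id_atTop C).comp_tendsto tendsto_natCast_atTop_atTop)

lemma norm_sum_range_shift_sub_le {E : Type*} [SeminormedAddCommGroup E] {u : ℕ → E} {C : ℝ}
    (hu : ∀ j, ‖u j‖ ≤ C) (h N : ℕ) :
    ‖∑ j ∈ range N, u (j + h) - ∑ j ∈ range N, u j‖ ≤ 2 * C * h := by
  have telescope : ∑ j ∈ range N, u (j + h) - ∑ j ∈ range N, u j =
      ∑ i ∈ range h, (u (N + i) - u i) := by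
    simp only [add_comm _ h, sum_sub_distrib]
    rw [sub_eq_sub_iff_add_eq_add, add_comm, ← sum_range_add, add_comm h N, sum_range_add, add_comm]
  calc ‖∑ j ∈ range N, u (j + h) - ∑ j ∈ range N, u j‖
    _ ≤ ∑ _i ∈ range h, (C + C) := telescope ▸
        norm_sum_le_of_le _ fun i _ => norm_sub_le_of_le (hu (N + i)) (hu i)
    _ = 2 * C * h := by rw [sum_const, card_range, nsmul_eq_mul]; ring

variable {𝕜 E : Type*} [RCLike 𝕜] [SeminormedAddCommGroup E] [InnerProductSpace 𝕜 E]

lemma norm_inner_le_of_norm_le {C : ℝ} {x y : E} (hx : ‖x‖ ≤ C) (hy : ‖y‖ ≤ C) :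
    ‖⟪x, y⟫_𝕜‖ ≤ C * C :=
  (norm_inner_le_norm x y).trans
    (mul_le_mul hx hy (norm_nonneg y) ((norm_nonneg x).trans hx))

lemma sq_norm_sum_sum_le {ι κ : Type*} (s : Finset ι) (t : Finset κ) (v : ι → κ → E) :
    ‖∑ j ∈ s, ∑ h ∈ t, v j h‖ ^ 2 ≤ #s * ∑ p ∈ t ×ˢ t, ‖∑ j ∈ s, ⟪v j p.1, v j p.2⟫_𝕜‖ := by
  have expand : ((∑ j ∈ s, ‖∑ h ∈ t, v j h‖ ^ 2 : ℝ) : 𝕜) =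
      ∑ p ∈ t ×ˢ t, ∑ j ∈ s, ⟪v j p.1, v j p.2⟫_𝕜 := by
    rw [sum_comm]
    push_cast
    refine sum_congr rfl fun j _ => ?_
    rw [← inner_self_eq_norm_sq_to_K (𝕜 := 𝕜), sum_inner, sum_product]
    exact sum_congr rfl fun h _ => inner_sum ..
  calc ‖∑ j ∈ s, ∑ h ∈ t, v j h‖ ^ 2
    _ ≤ (∑ j ∈ s, ‖∑ h ∈ t, v j h‖) ^ 2 := by gcongr; exact norm_sum_le _ _
    _ ≤ #s * ∑ j ∈ s, ‖∑ h ∈ t, v j h‖ ^ 2 := sq_sum_le_card_mul_sum_sq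
    _ = #s * ‖∑ p ∈ t ×ˢ t, ∑ j ∈ s, ⟪v j p.1, v j p.2⟫_𝕜‖ := by
        rw [← expand, RCLike.norm_of_nonneg (by positivity)]
    _ ≤ #s * ∑ p ∈ t ×ˢ t, ‖∑ j ∈ s, ⟪v j p.1, v j p.2⟫_𝕜‖ := by gcongr; exact norm_sum_le _ _

variable {u : ℕ → E} {C : ℝ}

lemma isLittleO_sum_range_inner_shift (hu : ∀ j, ‖u j‖ ≤ C)
    (hcorr : ∀ k : ℕ, 0 < k →
      (fun N : ℕ => ∑ j ∈ range N, ⟪u j, u (j + k)⟫_𝕜) =o[atTop] fun N => (N : ℝ))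
    {h h' : ℕ} (hne : h ≠ h') :
    (fun N : ℕ => ∑ j ∈ range N, ⟪u (j + h), u (j + h')⟫_𝕜) =o[atTop] fun N => (N : ℝ) := by
  wlog hlt : h < h' generalizing h h'
  · refine (this hne.symm (hne.symm.lt_of_le (not_lt.1 hlt))).norm_left.congr_left (fun N => ?_)
      |>.of_norm_left
    rw [← RCLike.norm_conj, map_sum]
    simp only [inner_conj_symm]
  obtain ⟨k, rfl⟩ := Nat.exists_eq_add_of_lt hlt
  have bound (j : ℕ) : ‖⟪u j, u (j + (k + 1))⟫_𝕜‖ ≤ C * C :=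
    norm_inner_le_of_norm_le (hu _) (hu _)
  have shift : (fun N : ℕ => ∑ j ∈ range N, ⟪u (j + h), u (j + h + (k + 1))⟫_𝕜 -
      ∑ j ∈ range N, ⟪u j, u (j + (k + 1))⟫_𝕜) =o[atTop] fun N => (N : ℝ) :=
    isLittleO_natCast_of_norm_le (norm_sum_range_shift_sub_le bound h)
  refine (shift.add (hcorr (k + 1) k.succ_pos)).congr_left fun N => ?_
  simp only [sub_add_cancel, add_assoc]

lemma eventually_norm_sum_sum_shift_le (hu : ∀ j, ‖u j‖ ≤ C)
    (hcorr : ∀ k : ℕ, 0 < k →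
      (fun N : ℕ => ∑ j ∈ range N, ⟪u j, u (j + k)⟫_𝕜) =o[atTop] fun N => (N : ℝ)) (H : ℕ) :
    ∀ᶠ N : ℕ in atTop,
      ‖∑ j ∈ range N, ∑ h ∈ range H, u (j + h)‖ ^ 2 ≤ (H * C ^ 2 + 1) * (N : ℝ) ^ 2 := by
  have offDiag_isLittleO : (fun N : ℕ => ∑ p ∈ (range H).offDiag,
      ‖∑ j ∈ range N, ⟪u (j + p.1), u (j + p.2)⟫_𝕜‖) =o[atTop] fun N => (N : ℝ) :=
    .fun_sum fun p hp => (isLittleO_sum_range_inner_shift hu hcorr (mem_offDiag.1 hp).2.2).norm_left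
  filter_upwards [offDiag_isLittleO.bound one_pos] with N hN
  have diag_le (h : ℕ) : ‖∑ j ∈ range N, ⟪u (j + h), u (j + h)⟫_𝕜‖ ≤ N * C ^ 2 := by
    calc ‖∑ j ∈ range N, ⟪u (j + h), u (j + h)⟫_𝕜‖
      _ ≤ ∑ _j ∈ range N, C ^ 2 := norm_sum_le_of_le _ fun j _ => by
          rw [sq]
          exact norm_inner_le_of_norm_le (hu _) (hu _)
      _ = N * C ^ 2 := by simp
  calc ‖∑ j ∈ range N, ∑ h ∈ range H, u (j + h)‖ ^ 2
    _ ≤ N * ∑ p ∈ range H ×ˢ range H, ‖∑ j ∈ range N, ⟪u (j + p.1), u (j + p.2)⟫_𝕜‖ := by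
        simpa using sq_norm_sum_sum_le (𝕜 := 𝕜) (range N) (range H) fun j h => u (j + h)
    _ ≤ N * (∑ _h ∈ range H, N * C ^ 2 + N) := by
        rw [← diag_union_offDiag, sum_union (disjoint_diag_offDiag _), sum_diag]
        gcongr with h
        · exact diag_le h
        · simpa [abs_of_nonneg, sum_nonneg] using hN
    _ = (H * C ^ 2 + 1) * (N : ℝ) ^ 2 := by
        rw [sum_const, card_range, nsmul_eq_mul]
        ring

/-- Van der Corput's criterion. Averaging the sum over `H` shifts costs only `O(H)`, and by
Cauchy-Schwarz the square of the averaged sum is controlled by correlations, of which only the `H`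
diagonal ones are not `o(N)`; this leaves a bound of order `N / √H`. -/
theorem isLittleO_sum_range_of_inner_shift (hu : ∀ j, ‖u j‖ ≤ C)
    (hcorr : ∀ k : ℕ, 0 < k →
      (fun N : ℕ => ∑ j ∈ range N, ⟪u j, u (j + k)⟫_𝕜) =o[atTop] fun N => (N : ℝ)) :
    (fun N : ℕ => ∑ j ∈ range N, u j) =o[atTop] fun N => (N : ℝ) := by
  have hC : 0 ≤ C := (norm_nonneg _).trans (hu 0)
  refine isLittleO_iff.2 fun ε hε => ?_
  obtain ⟨H, hH⟩ := exists_nat_ge (max 1 (4 * (C ^ 2 + 1) / ε ^ 2))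
  have hH1 : (1 : ℝ) ≤ H := (le_max_left _ _).trans hH
  have hHε : H * C ^ 2 + 1 ≤ (ε * H / 2) ^ 2 := by
    have := (div_le_iff₀ (by positivity)).1 ((le_max_right _ _).trans hH)
    nlinarith
  filter_upwards [eventually_norm_sum_sum_shift_le hu hcorr H,
    tendsto_natCast_atTop_atTop.eventually_ge_atTop (4 * C * H / ε)] with N hsum hN
  have hsum' : ‖∑ j ∈ range N, ∑ h ∈ range H, u (j + h)‖ ≤ ε * H / 2 * N := by
    refine le_of_sq_le_sq (hsum.trans ?_) (by positivity)
    rw [mul_pow]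
    gcongr
  have hshift : ‖∑ j ∈ range N, ∑ h ∈ range H, u (j + h) - H • ∑ j ∈ range N, u j‖ ≤
      H * (2 * C * H) := by
    rw [sum_comm, ← card_range H, ← sum_const, card_range, ← sum_sub_distrib]
    refine (norm_sum_le_of_le _ fun h hh => (norm_sum_range_shift_sub_le hu h N).trans
      (mul_le_mul_of_nonneg_left (Nat.cast_le.2 (mem_range.1 hh).le) (by positivity))).trans_eq ?_
    simp
  have hmul : H * ‖∑ j ∈ range N, u j‖ ≤ H * (ε * N) := by
    have hN' := (div_le_iff₀ hε).1 hN
    calc H * ‖∑ j ∈ range N, u j‖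
      _ = ‖H • ∑ j ∈ range N, u j‖ := by
          rw [← Nat.cast_smul_eq_nsmul 𝕜, norm_smul, RCLike.norm_natCast]
      _ ≤ ε * H / 2 * N + H * (2 * C * H) := by
          simpa only [sub_sub_cancel] using norm_sub_le_of_le hsum' hshift
      _ ≤ H * (ε * N) := by nlinarith
  simpa using le_of_mul_le_mul_left hmul (by positivity)

end VanDerCorput

section Weyl

lemma norm_geom_sum_le {z : ℂ} (hz : ‖z‖ = 1) (hz1 : z ≠ 1) (N : ℕ) :
    ‖∑ j ∈ range N, z ^ j‖ ≤ 2 / ‖z - 1‖ := by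
  rw [geom_sum_eq hz1, norm_div]
  gcongr
  calc ‖z ^ N - 1‖ ≤ 1 + 1 := norm_sub_le_of_le (by simp [hz]) norm_one.le
    _ = 2 := one_add_one_eq_two

theorem isLittleO_sum_range_quadratic {z : Circle} (hz : ¬ IsOfFinOrder z) (w a : Circle) :
    (fun N : ℕ => ∑ j ∈ range N, ((z ^ j ^ 2 * w ^ j * a : Circle) : ℂ)) =o[atTop]
      fun N => (N : ℝ) := by
  refine isLittleO_sum_range_of_inner_shift (𝕜 := ℂ) (fun j => (Circle.norm_coe _).le)
    fun k hk => ?_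
  have correlation (j : ℕ) : ⟪((z ^ j ^ 2 * w ^ j * a : Circle) : ℂ),
      ((z ^ (j + k) ^ 2 * w ^ (j + k) * a : Circle) : ℂ)⟫_ℂ =
        ((z ^ k ^ 2 * w ^ k : Circle) : ℂ) * ((z ^ (2 * k) : Circle) : ℂ) ^ j := by
    rw [RCLike.inner_apply, ← Circle.coe_inv_eq_conj, ← Circle.coe_mul, ← Circle.coe_pow,
      ← Circle.coe_mul, mul_inv_eq_iff_eq_mul.2]
    ext
    simp only [Circle.coe_mul, Circle.coe_pow]
    ring
  have ratio_ne_one : ((z ^ (2 * k) : Circle) : ℂ) ≠ 1 := fun h =>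
    hz (isOfFinOrder_iff_pow_eq_one.2 ⟨2 * k, by positivity, Circle.coe_eq_one.1 h⟩)
  simp only [correlation, ← mul_sum]
  exact (isLittleO_natCast_of_norm_le
    (norm_geom_sum_le (Circle.norm_coe _) ratio_ne_one)).const_mul_left _

end Weyl

section Equidistribution

variable {X : Type*} [TopologicalSpace X] [MeasurableSpace X]

/-- A sequence in a compact space `X` is equidistributed with respect to `μ` if the averages along
it of every continuous function tend to the integral of that function. This is encoded without
division: the sum over the first `N` terms of the deviations from the integral is `o(N)`. -/
def Equidistributed (μ : Measure X) (x : ℕ → X) : Prop :=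
  ∀ f : C(X, ℂ), (fun N : ℕ => ∑ j ∈ range N, (f (x j) - ∫ y, f y ∂μ)) =o[atTop] fun N => (N : ℝ)

variable [CompactSpace X] {μ : Measure X} [IsProbabilityMeasure μ] {x : ℕ → X}

lemma norm_apply_sub_integral_le (f : C(X, ℂ)) (y : X) : ‖f y - ∫ z, f z ∂μ‖ ≤ 2 * ‖f‖ := by
  rw [two_mul]
  refine norm_sub_le_of_le (f.norm_coe_le_norm y) ?_
  simpa using norm_integral_le_of_norm_le_const (μ := μ) (.of_forall f.norm_coe_le_norm)

variable [BorelSpace X]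

lemma integrable_continuousMap (f : C(X, ℂ)) : Integrable f μ :=
  f.continuous.integrable_of_hasCompactSupport (.of_compactSpace _)

lemma isLittleO_sum_sub_integral_of_mem_span {S : Set C(X, ℂ)}
    (h : ∀ f ∈ S, (fun N : ℕ => ∑ j ∈ range N, (f (x j) - ∫ y, f y ∂μ)) =o[atTop]
      fun N => (N : ℝ)) {f : C(X, ℂ)} (hf : f ∈ Submodule.span ℂ S) :
    (fun N : ℕ => ∑ j ∈ range N, (f (x j) - ∫ y, f y ∂μ)) =o[atTop] fun N => (N : ℝ) := by
  induction hf using Submodule.span_induction with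
  | mem f hf => exact h f hf
  | zero => simp
  | add f g _ _ hf hg =>
    refine (hf.add hg).congr_left fun N => ?_
    simp only [ContinuousMap.add_apply, integral_add (integrable_continuousMap f)
      (integrable_continuousMap g), ← sum_add_distrib, add_sub_add_comm]
  | smul a f _ hf =>
    refine (hf.const_mul_left a).congr_left fun N => ?_
    simp only [ContinuousMap.smul_apply, smul_eq_mul, integral_const_mul, mul_sum, mul_sub]

theorem Equidistributed.of_span_dense {S : Set C(X, ℂ)}
    (hS : (Submodule.span ℂ S).topologicalClosure = ⊤)
    (h : ∀ f ∈ S, (fun N : ℕ => ∑ j ∈ range N, (f (x j) - ∫ y, f y ∂μ)) =o[atTop]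
      fun N => (N : ℝ)) :
    Equidistributed μ x := by
  refine fun f => isLittleO_iff.2 fun ε hε => ?_
  have hf : f ∈ (Submodule.span ℂ S).topologicalClosure := hS ▸ Submodule.mem_top
  obtain ⟨g, hg, hfg⟩ := Metric.mem_closure_iff.1 hf (ε / 4) (by positivity)
  filter_upwards [(isLittleO_sum_sub_integral_of_mem_span h hg).bound (half_pos hε)] with N hN
  have approx : ‖∑ j ∈ range N, ((f - g) (x j) - ∫ y, (f - g) y ∂μ)‖ ≤ N * (ε / 2) := by
    refine (norm_sum_le_of_le _ fun j _ => norm_apply_sub_integral_le (f - g) (x j)).trans ?_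
    rw [sum_const, card_range, nsmul_eq_mul]
    rw [dist_eq_norm] at hfg
    gcongr
    linarith
  calc ‖∑ j ∈ range N, (f (x j) - ∫ y, f y ∂μ)‖
    _ = ‖∑ j ∈ range N, (g (x j) - ∫ y, g y ∂μ) +
          ∑ j ∈ range N, ((f - g) (x j) - ∫ y, (f - g) y ∂μ)‖ := by
        simp only [ContinuousMap.sub_apply, integral_sub (integrable_continuousMap f)
          (integrable_continuousMap g), ← sum_add_distrib]
        congr! 2
        ring
    _ ≤ ε / 2 * ‖(N : ℝ)‖ + N * (ε / 2) := norm_add_le_of_le hN approx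
    _ = ε * ‖(N : ℝ)‖ := by rw [Real.norm_natCast]; ring

theorem Equidistributed.denseRange [T2Space X] [μ.IsOpenPosMeasure] (hx : Equidistributed μ x) :
    DenseRange x := by
  refine dense_iff_inter_open.2 fun U hU ⟨y, hyU⟩ => ?_
  by_contra hempty
  obtain ⟨f, hf_zero, hf_one, hf_mem⟩ := exists_continuous_zero_one_of_isClosed hU.isClosed_compl
    (isClosed_singleton (x := y)) (Set.disjoint_singleton_right.2 (not_not.2 hyU))
  have integral_pos : 0 < ∫ z, f z ∂μ :=
    f.continuous.integral_pos_of_hasCompactSupport_nonneg_nonzero (.of_compactSpace _)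
      (fun z => (hf_mem z).1) (x := y) (by simp [hf_one rfl])
  have hsum (N : ℕ) : ∑ j ∈ range N, ((f (x j) : ℂ) - ∫ z, (f z : ℂ) ∂μ) =
      -(N * ((∫ z, f z ∂μ : ℝ) : ℂ)) := by
    have hx_zero (j : ℕ) : f (x j) = 0 := hf_zero fun hj => hempty ⟨x j, hj, j, rfl⟩
    simp [hx_zero, integral_complex_ofReal]
  have hlittle := (hx ⟨fun z => (f z : ℂ), by fun_prop⟩).bound (half_pos integral_pos)
  obtain ⟨N, hN, hNpos⟩ := (hlittle.and (eventually_gt_atTop 0)).exists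
  have hN' : (N : ℝ) * ∫ z, f z ∂μ ≤ (∫ z, f z ∂μ) / 2 * N := by
    simpa [hsum, abs_of_pos integral_pos] using hN
  have : (0 : ℝ) < N := mod_cast hNpos
  nlinarith

end Equidistribution

section Torus

variable {d : Type*} [Fintype d]

open UnitAddTorus

lemma mFourier_apply_eq_toCircle (n : d → ℤ) (x : UnitAddTorus d) :
    mFourier n x = AddCircle.toCircle (∑ i, n i • x i) := by
  classical
  have toCircle_sum (s : Finset d) : AddCircle.toCircle (∑ i ∈ s, n i • x i) =
      ∏ i ∈ s, AddCircle.toCircle (n i • x i) := by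
    induction s using Finset.induction_on with
    | empty => simp
    | insert i s hi ih => rw [sum_insert hi, prod_insert hi, AddCircle.toCircle_add, ih]
  simp only [mFourier, fourier_apply, ContinuousMap.coe_mk, toCircle_sum]
  exact (map_prod Circle.coeHom _ _).symm

lemma mFourier_quadratic (n : d → ℤ) (α β γ : UnitAddTorus d) (j : ℕ) :
    mFourier n (j ^ 2 • α + j • β + γ) =
      ((AddCircle.toCircle (∑ i, n i • α i) ^ j ^ 2 * AddCircle.toCircle (∑ i, n i • β i) ^ j *
        AddCircle.toCircle (∑ i, n i • γ i) : Circle) : ℂ) := by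
  rw [mFourier_apply_eq_toCircle, ← AddCircle.toCircle_nsmul, ← AddCircle.toCircle_nsmul,
    ← AddCircle.toCircle_add, ← AddCircle.toCircle_add]
  simp only [Pi.add_apply, Pi.smul_apply, smul_add, sum_add_distrib, smul_sum, smul_comm (n _)]

instance inst_s11 : IsProbabilityMeasure (volume : Measure UnitAddCircle) := ⟨UnitAddCircle.measure_univ⟩

lemma integral_mFourier_eq_zero {n : d → ℤ} (hn : n ≠ 0) :
    ∫ x : UnitAddTorus d, mFourier n x = 0 := by
  obtain ⟨i, hi⟩ := Function.ne_iff.1 hn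
  have fourier_integral : ∫ t : UnitAddCircle, fourier (n i) t = 0 := by
    exact integral_eq_zero_of_add_right_eq_neg (μ := volume) (fourier_add_half_inv_index hi one_pos)
  have : ∫ x : UnitAddTorus d, mFourier n x = ∏ i, ∫ t : UnitAddCircle, fourier (n i) t := by
    exact integral_fintype_prod_volume_eq_prod _
  rw [this, prod_eq_zero (mem_univ i) fourier_integral]

theorem equidistributed_quadratic {α : UnitAddTorus d}
    (hα : ∀ n : d → ℤ, n ≠ 0 → ¬ IsOfFinAddOrder (∑ i, n i • α i)) (β γ : UnitAddTorus d) :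
    Equidistributed volume fun j : ℕ => j ^ 2 • α + j • β + γ := by
  refine .of_span_dense (S := Set.range mFourier) span_mFourier_closure_eq_top ?_
  rintro _ ⟨n, rfl⟩
  rcases eq_or_ne n 0 with rfl | hn
  · simp [mFourier_zero]
  have not_finite_order : ¬ IsOfFinOrder (AddCircle.toCircle (∑ i, n i • α i)) := by
    intro h
    obtain ⟨k, hk, hpow⟩ := isOfFinOrder_iff_pow_eq_one.1 h
    refine hα n hn (isOfFinAddOrder_iff_nsmul_eq_zero.2 ⟨k, hk, ?_⟩)
    exact AddCircle.injective_toCircle one_ne_zero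
      (by rw [AddCircle.toCircle_nsmul, hpow, AddCircle.toCircle_zero])
  simpa only [integral_mFourier_eq_zero hn, sub_zero, mFourier_quadratic] using
    isLittleO_sum_range_quadratic not_finite_order _ _

theorem exists_forall_exists_lt_quadratic_mem {α : UnitAddTorus d}
    (hα : ∀ n : d → ℤ, n ≠ 0 → ¬ IsOfFinAddOrder (∑ i, n i • α i))
    {U : Set (UnitAddTorus d)} (hU : IsOpen U) (hne : U.Nonempty) :
    ∃ m : ℕ, ∀ β γ : UnitAddTorus d, ∃ j < m, j ^ 2 • α + j • β + γ ∈ U := by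
  let V (j : ℕ) : Set (UnitAddTorus d × UnitAddTorus d) :=
    (fun p => j ^ 2 • α + j • p.1 + p.2) ⁻¹' U
  have cover : Set.univ ⊆ ⋃ j, V j := fun p _ => by
    obtain ⟨j, hj⟩ := (equidistributed_quadratic hα p.1 p.2).denseRange.exists_mem_open hU hne
    exact Set.mem_iUnion.2 ⟨j, hj⟩
  obtain ⟨t, ht⟩ := isCompact_univ.elim_finite_subcover V
    (fun j => hU.preimage (by fun_prop)) cover
  refine ⟨t.sup id + 1, fun β γ => ?_⟩
  obtain ⟨j, hjt, hj⟩ := Set.mem_iUnion₂.1 (ht (Set.mem_univ (β, γ)))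
  exact ⟨j, Nat.lt_succ_of_le (le_sup (f := id) hjt), hj⟩

end Torus

section Irrational

lemma exists_forall_irrational_mul {S : Set ℝ} (hS : S.Countable) :
    ∃ l : ℝ, ∀ a ∈ S, a ≠ 0 → Irrational (l * a) := by
  have countable_bad : (⋃ a ∈ S, Set.range fun q : ℚ => (q : ℝ) / a).Countable :=
    hS.biUnion fun a _ => Set.countable_range _
  have bad_ne_univ : (⋃ a ∈ S, Set.range fun q : ℚ => (q : ℝ) / a) ≠ Set.univ := fun h =>
    Set.not_countable_univ (h ▸ countable_bad)
  obtain ⟨l, hl⟩ := (Set.ne_univ_iff_exists_notMem _).1 bad_ne_univ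
  refine ⟨l, fun a ha ha0 ⟨q, hq⟩ => hl ?_⟩
  exact Set.mem_iUnion₂.2 ⟨a, ha, q, (div_eq_iff ha0).2 hq⟩

lemma exists_forall_span_irrational_mul {t : Set ℝ} (ht : t.Countable) :
    ∃ l : ℝ, ∀ a ∈ Submodule.span ℤ t, a ≠ 0 → Irrational (l * a) := by
  have := ht.to_subtype
  have : Countable (Submodule.span ℤ t) := by
    rw [← Subtype.range_val (s := t)]
    infer_instance
  exact exists_forall_irrational_mul (Set.to_countable (Submodule.span ℤ t : Set ℝ))

lemma exists_linearIndependent_span_eq {R M : Type*} [CommRing R] [IsDomain R]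
    [IsPrincipalIdealRing R] [AddCommGroup M] [Module R M] [Module.IsTorsionFree R M]
    {t : Set M} (ht : t.Finite) :
    ∃ (n : ℕ) (e : Fin n → M), LinearIndependent R e ∧
      Submodule.span R (Set.range e) = Submodule.span R t := by
  have := Module.Finite.span_of_finite R ht
  let basis := Module.finBasis R (Submodule.span R t)
  refine ⟨_, Submodule.subtype _ ∘ basis,
    basis.linearIndependent.map' _ (Submodule.ker_subtype _), ?_⟩
  rw [Set.range_comp, ← Submodule.map_span, basis.span_eq, Submodule.map_top,
    Submodule.range_subtype]

end Irrational

section Recurrence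

lemma coe_sum_zsmul_mul {ι : Type*} [Fintype ι] (k : ι → ℤ) (e : ι → ℝ) (y : ℝ) :
    (((∑ i, k i • e i) * y : ℝ) : UnitAddCircle) = ∑ i, k i • ((e i * y : ℝ) : UnitAddCircle) := by
  rw [sum_mul]
  refine (map_sum (QuotientAddGroup.mk' (AddSubgroup.zmultiples (1 : ℝ))) _ _).trans
    (sum_congr rfl fun i _ => ?_)
  rw [smul_mul_assoc]
  exact AddCircle.coe_zsmul ..

lemma not_isOfFinAddOrder_coe_of_irrational {a : ℝ} (ha : Irrational a) :
    ¬ IsOfFinAddOrder (a : UnitAddCircle) :=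
  AddCircle.not_isOfFinAddOrder_iff_forall_rat_ne_div.2 fun q hq => ha ⟨q, by simpa using hq⟩

theorem exists_forall_exists_lt_norm_quadratic_lt {t : Set ℝ} (ht : t.Finite)
    (hirr : ∀ a ∈ Submodule.span ℤ t, a ≠ 0 → Irrational a) {δ : ℝ} (hδ : 0 < δ) :
    ∃ m : ℕ, ∀ β γ : ℝ, ∃ j < m, ∀ a ∈ t,
      ‖((a * (j ^ 2 + j * β + γ) : ℝ) : UnitAddCircle)‖ < δ := by
  obtain ⟨n, e, he, hspan⟩ := exists_linearIndependent_span_eq (R := ℤ) ht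
  have coeffs (a : t) : ∃ k : Fin n → ℤ, ∑ i, k i • e i = a :=
    (Submodule.mem_span_range_iff_exists_fun ℤ).1 (hspan ▸ Submodule.subset_span a.2)
  choose k hk using coeffs
  let P (y : ℝ) : UnitAddTorus (Fin n) := fun i => ((e i * y : ℝ) : UnitAddCircle)
  have P_quadratic (β γ : ℝ) (j : ℕ) : P (j ^ 2 + j * β + γ) = j ^ 2 • P 1 + j • P β + P γ := by
    funext i
    simp only [P, Pi.add_apply, Pi.smul_apply, ← AddCircle.coe_nsmul, ← AddCircle.coe_add,
      nsmul_eq_mul]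
    congr 1
    push_cast
    ring
  have independent (c : Fin n → ℤ) (hc : c ≠ 0) : ¬ IsOfFinAddOrder (∑ i, c i • P 1 i) := by
    rw [← coe_sum_zsmul_mul, mul_one]
    refine not_isOfFinAddOrder_coe_of_irrational (hirr _ ?_ fun h => hc ?_)
    · exact hspan ▸ (Submodule.mem_span_range_iff_exists_fun ℤ).2 ⟨c, rfl⟩
    · exact funext (Fintype.linearIndependent_iff.1 he c h)
  let U : Set (UnitAddTorus (Fin n)) := {x | ∀ a : t, ‖∑ i, k a i • x i‖ < δ}
  have isOpen_U : IsOpen U := by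
    have := ht.to_subtype
    simp only [U, Set.ofPred_forall]
    exact isOpen_iInter_of_finite fun a => isOpen_lt (by fun_prop) continuous_const
  obtain ⟨m, hm⟩ := exists_forall_exists_lt_quadratic_mem independent isOpen_U
    ⟨0, fun a => by simpa using hδ⟩
  refine ⟨m, fun β γ => ?_⟩
  obtain ⟨j, hj, hjU⟩ := hm (P β) (P γ)
  refine ⟨j, hj, fun a ha => ?_⟩
  have := hjU ⟨a, ha⟩
  rwa [← P_quadratic, ← coe_sum_zsmul_mul, hk] at this

end Recurrence

section Geometry

lemma exists_forall_eq_add_linearMap_apply {ι K V : Type*} [Field K] [AddCommGroup V] [Module K V]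
    {p : ι → V} {b : ι → K}
    (h : ∀ (s : Finset ι) (c : ι → K), ∑ i ∈ s, c i = 0 → ∑ i ∈ s, c i • p i = 0 →
      ∑ i ∈ s, c i * b i = 0) :
    ∃ (a : K) (ℓ : V →ₗ[K] K), ∀ i, b i = a + ℓ (p i) := by
  let A := Finsupp.linearCombination K fun i => ((1 : K), p i)
  let B := Finsupp.linearCombination K b
  have ker_le (c : ι →₀ K) (hc : A c = 0) : B c = 0 := by
    simp only [A, B, Finsupp.linearCombination_apply, Finsupp.sum, smul_eq_mul, Prod.smul_mk,
      mul_one, Prod.ext_iff, Prod.fst_sum, Prod.snd_sum, Prod.fst_zero, Prod.snd_zero] at hc ⊢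
    exact h c.support c hc.1 hc.2
  obtain ⟨L, hL⟩ : B ∈ LinearMap.range A.dualMap := by
    rw [LinearMap.range_dualMap_eq_dualAnnihilator_ker, Submodule.mem_dualAnnihilator]
    exact ker_le
  refine ⟨L (1, 0), L ∘ₗ LinearMap.inr K K V, fun i => ?_⟩
  have apply_single : L (1, p i) = b i := by
    simpa [A, B] using LinearMap.congr_fun hL (Finsupp.single i 1)
  rw [LinearMap.comp_apply, LinearMap.inr_apply, ← map_add, Prod.mk_add_mk, add_zero, zero_add,
    apply_single]

variable {ι E F : Type*} [NormedAddCommGroup E] [InnerProductSpace ℝ E]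
  [NormedAddCommGroup F] [InnerProductSpace ℝ F]

lemma cospherical_of_sq_norm_eq_add_inner {X : Set E} {a : ℝ} {v : E}
    (h : ∀ x ∈ X, ‖x‖ ^ 2 = a + ⟪v, x⟫_ℝ) : Cospherical X := by
  refine ⟨(2⁻¹ : ℝ) • v, √(a + ‖(2⁻¹ : ℝ) • v‖ ^ 2), fun x hx => ?_⟩
  rw [dist_eq_norm, ← Real.sqrt_sq (norm_nonneg (x - _)), norm_sub_sq_real, h x hx,
    inner_smul_right, real_inner_comm]
  congr 1
  ring

theorem exists_sum_mul_sq_norm_ne_zero_of_not_cospherical [FiniteDimensional ℝ E] {p : ι → E}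
    (hp : ¬ Cospherical (Set.range p)) :
    ∃ (s : Finset ι) (c : ι → ℝ), ∑ i ∈ s, c i = 0 ∧ ∑ i ∈ s, c i • p i = 0 ∧
      ∑ i ∈ s, c i * ‖p i‖ ^ 2 ≠ 0 := by
  by_contra! h
  obtain ⟨a, ℓ, hℓ⟩ := exists_forall_eq_add_linearMap_apply h
  refine hp (cospherical_of_sq_norm_eq_add_inner (a := a)
    (v := (InnerProductSpace.toDual ℝ E).symm ℓ.toContinuousLinearMap) ?_)
  rintro _ ⟨i, rfl⟩
  simpa using hℓ i

variable {s : Finset ι} {c : ι → ℝ} {p : ι → E} {q : ι → F}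

lemma sum_mul_sq_dist_eq_sum_mul_sq_norm (hc : ∑ i ∈ s, c i = 0) (hp : ∑ i ∈ s, c i • p i = 0)
    (y : E) : ∑ i ∈ s, c i * dist (p i) y ^ 2 = ∑ i ∈ s, c i * ‖p i‖ ^ 2 := by
  have inner_eq_zero : ∑ i ∈ s, c i * ⟪p i, y⟫_ℝ = 0 := by
    simp only [← real_inner_smul_left, ← sum_inner, hp, inner_zero_left]
  calc ∑ i ∈ s, c i * dist (p i) y ^ 2
    _ = ∑ i ∈ s, c i * ‖p i‖ ^ 2 - 2 * ∑ i ∈ s, c i * ⟪p i, y⟫_ℝ + (∑ i ∈ s, c i) * ‖y‖ ^ 2 := by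
        rw [mul_sum, sum_mul, ← sum_sub_distrib, ← sum_add_distrib]
        refine sum_congr rfl fun i _ => ?_
        rw [dist_eq_norm, norm_sub_sq_real]
        ring
    _ = ∑ i ∈ s, c i * ‖p i‖ ^ 2 := by rw [inner_eq_zero, hc]; ring

lemma sum_smul_eq_zero_of_dist_eq (hc : ∑ i ∈ s, c i = 0) (hp : ∑ i ∈ s, c i • p i = 0)
    (hpq : ∀ i ∈ s, ∀ j ∈ s, dist (q i) (q j) = dist (p i) (p j)) :
    ∑ i ∈ s, c i • q i = 0 := by
  have inner_eq : ⟪∑ i ∈ s, c i • q i, ∑ i ∈ s, c i • q i⟫_ℝ =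
      ⟪∑ i ∈ s, c i • p i, ∑ i ∈ s, c i • p i⟫_ℝ := by
    simp only [inner_sum_smul_sum_smul_of_sum_eq_zero _ hc _ hc, ← dist_eq_norm]
    congr! 5 with i hi j hj
    rw [hpq i hi j hj]
  rw [← inner_self_eq_zero (𝕜 := ℝ), inner_eq, hp, inner_zero_left]

theorem sum_mul_sq_norm_eq_of_dist_eq (hc : ∑ i ∈ s, c i = 0) (hp : ∑ i ∈ s, c i • p i = 0)
    (hpq : ∀ i ∈ s, ∀ j ∈ s, dist (q i) (q j) = dist (p i) (p j)) :
    ∑ i ∈ s, c i * ‖q i‖ ^ 2 = ∑ i ∈ s, c i * ‖p i‖ ^ 2 := by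
  rcases s.eq_empty_or_nonempty with rfl | ⟨j, hj⟩
  · simp
  rw [← sum_mul_sq_dist_eq_sum_mul_sq_norm hc (sum_smul_eq_zero_of_dist_eq hc hp hpq) (q j),
    ← sum_mul_sq_dist_eq_sum_mul_sq_norm hc hp (p j)]
  exact sum_congr rfl fun i hi => by rw [hpq i hi j hj]

theorem exists_irrational_relation_of_not_cospherical [FiniteDimensional ℝ E]
    (hp : ¬ Cospherical (Set.range p)) :
    ∃ (s : Finset ι) (c : ι → ℝ), ∑ i ∈ s, c i = 0 ∧ ∑ i ∈ s, c i • p i = 0 ∧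
      Irrational (∑ i ∈ s, c i * ‖p i‖ ^ 2) ∧
      ∀ a ∈ Submodule.span ℤ (c '' s), a ≠ 0 → Irrational a := by
  obtain ⟨s, c, hc, hcp, hb⟩ := exists_sum_mul_sq_norm_ne_zero_of_not_cospherical hp
  obtain ⟨l, hl⟩ := exists_forall_span_irrational_mul
    ((s.countable_toSet.image c).insert (∑ i ∈ s, c i * ‖p i‖ ^ 2))
  refine ⟨s, fun i => l * c i, ?_, ?_, ?_, fun a ha ha0 => ?_⟩
  · rw [← mul_sum, hc, mul_zero]
  · simp only [mul_smul, ← smul_sum, hcp, smul_zero]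
  · simp only [mul_assoc, ← mul_sum]
    exact hl _ (Submodule.subset_span (Set.mem_insert _ _)) hb
  · have image_eq : (fun i => l * c i) '' s =
        (AddMonoidHom.mulLeft l).toIntLinearMap '' (c '' s) := by
      rw [Set.image_image]
      rfl
    rw [image_eq, ← Submodule.map_span] at ha
    obtain ⟨a, ha, rfl⟩ := ha
    exact hl a (Submodule.span_mono (Set.subset_insert _ _) ha) (right_ne_zero_of_mul ha0)

end Geometry

section Colouring

/-- The red class of the colouring: the points `x` for which all products `a * ‖x‖ ^ 2` with `a`
in `t` lie within `δ` of an integer. -/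
def redPoints (F : Type*) [Norm F] (t : Set ℝ) (δ : ℝ) : Set F :=
  {x | ∀ a ∈ t, ‖((a * ‖x‖ ^ 2 : ℝ) : UnitAddCircle)‖ < δ}

theorem exists_notMem_redPoints {ι F : Type*} [Norm F] {s : Finset ι} {c : ι → ℝ} {q : ι → F}
    (h : ((∑ i ∈ s, c i * ‖q i‖ ^ 2 : ℝ) : UnitAddCircle) ≠ 0) :
    ∃ i ∈ s, q i ∉ redPoints F (c '' s)
      (‖((∑ i ∈ s, c i * ‖q i‖ ^ 2 : ℝ) : UnitAddCircle)‖ / (#s + 1)) := by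
  by_contra! hred
  set b : UnitAddCircle := ((∑ i ∈ s, c i * ‖q i‖ ^ 2 : ℝ) : UnitAddCircle)
  have coe_sum : b = ∑ i ∈ s, ((c i * ‖q i‖ ^ 2 : ℝ) : UnitAddCircle) :=
    map_sum (QuotientAddGroup.mk' (AddSubgroup.zmultiples (1 : ℝ))) _ _
  have : ‖b‖ < ‖b‖ := by
    calc ‖b‖
      _ ≤ ∑ _i ∈ s, ‖b‖ / (#s + 1) := by
          conv_lhs => rw [coe_sum]
          exact norm_sum_le_of_le _ fun i hi =>
            (hred i hi (c i) (Set.mem_image_of_mem c hi)).le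
      _ = ‖b‖ * (#s / (#s + 1)) := by rw [sum_const, nsmul_eq_mul]; ring
      _ < ‖b‖ := mul_lt_of_lt_one_right (norm_pos_iff.2 h)
          ((div_lt_one (by positivity)).2 (lt_add_one _))
  exact this.false

universe v

theorem exists_forall_exists_lt_add_smul_mem_redPoints {t : Set ℝ} (ht : t.Finite)
    (hirr : ∀ a ∈ Submodule.span ℤ t, a ≠ 0 → Irrational a) {δ : ℝ} (hδ : 0 < δ) :
    ∃ m : ℕ, ∀ (F : Type v) [NormedAddCommGroup F] [InnerProductSpace ℝ F] (w u : F), ‖u‖ = 1 →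
      ∃ j < m, w + j • u ∈ redPoints F t δ := by
  obtain ⟨m, hm⟩ := exists_forall_exists_lt_norm_quadratic_lt ht hirr hδ
  refine ⟨m, fun F _ _ w u hu => ?_⟩
  have sq_norm (j : ℕ) : ‖w + j • u‖ ^ 2 = j ^ 2 + j * (2 * ⟪w, u⟫_ℝ) + ‖w‖ ^ 2 := by
    rw [← Nat.cast_smul_eq_nsmul ℝ, norm_add_sq_real, inner_smul_right, norm_smul, hu,
      Real.norm_natCast]
    ring
  obtain ⟨j, hj, hjt⟩ := hm (2 * ⟪w, u⟫_ℝ) (‖w‖ ^ 2)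
  exact ⟨j, hj, fun a ha => by rw [sq_norm]; exact hjt a ha⟩

lemma apply_eq_apply_zero_add_smul {M : Type*} [AddMonoid M] {m : ℕ} {w : Fin m → M} {u : M}
    (hstep : ∀ j : Fin m, ∀ hj : (j : ℕ) + 1 < m, w ⟨(j : ℕ) + 1, hj⟩ = w j + u)
    (j : ℕ) (hj : j < m) : w ⟨j, hj⟩ = w ⟨0, j.zero_le.trans_lt hj⟩ + j • u := by
  induction j with
  | zero => rw [zero_nsmul, add_zero]
  | succ j ih => rw [hstep ⟨j, j.lt_succ_self.trans hj⟩ hj, ih, succ_nsmul, add_assoc]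

theorem stmt_11_general {E : Type*} [NormedAddCommGroup E] [InnerProductSpace ℝ E]
    [FiniteDimensional ℝ E] {X : Set E} (hX : ¬ Cospherical X) :
    ∃ m : ℕ, ∀ (F : Type v) [NormedAddCommGroup F] [InnerProductSpace ℝ F], ∃ R : Set F,
      (¬ ∃ f : E → F, (∀ x ∈ X, ∀ y ∈ X, dist (f x) (f y) = dist x y) ∧ f '' X ⊆ R) ∧
      ¬ ∃ (w : Fin m → F) (u : F), ‖u‖ = 1 ∧
        (∀ j : Fin m, ∀ hj : (j : ℕ) + 1 < m, w ⟨(j : ℕ) + 1, hj⟩ = w j + u) ∧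
        ∀ j : Fin m, w j ∉ R := by
  rw [← Subtype.range_val (s := X)] at hX
  obtain ⟨s, c, hc, hcp, hb, hirr⟩ := exists_irrational_relation_of_not_cospherical hX
  have hb_ne : ((∑ x ∈ s, c x * ‖(x : E)‖ ^ 2 : ℝ) : UnitAddCircle) ≠ 0 := fun h =>
    not_isOfFinAddOrder_coe_of_irrational hb (h ▸ .zero)
  set δ := ‖((∑ x ∈ s, c x * ‖(x : E)‖ ^ 2 : ℝ) : UnitAddCircle)‖ / (#s + 1)
  have hδ : 0 < δ := div_pos (norm_pos_iff.2 hb_ne) (by positivity)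
  obtain ⟨m, hm⟩ :=
    exists_forall_exists_lt_add_smul_mem_redPoints (s.finite_toSet.image c) hirr hδ
  refine ⟨m, fun F _ _ => ⟨redPoints F (c '' s) δ, ?_, ?_⟩⟩
  · rintro ⟨f, hf, hred⟩
    have hsum : ∑ x ∈ s, c x * ‖f x‖ ^ 2 = ∑ x ∈ s, c x * ‖(x : E)‖ ^ 2 :=
      sum_mul_sq_norm_eq_of_dist_eq hc hcp fun x _ y _ => hf x x.2 y y.2
    obtain ⟨x, -, hx⟩ := exists_notMem_redPoints (hsum ▸ hb_ne)
    exact hx (hsum ▸ hred ⟨x, x.2, rfl⟩)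
  · rintro ⟨w, u, hu, hstep, hblue⟩
    have hm_pos : 0 < m := let ⟨_, hj, _⟩ := hm F 0 u hu; Nat.zero_lt_of_lt hj
    obtain ⟨j, hj, hred⟩ := hm F (w ⟨0, hm_pos⟩) u hu
    exact hblue ⟨j, hj⟩ (apply_eq_apply_zero_add_smul hstep j hj ▸ hred)

end Colouring

lemma spherical_of_cospherical {d : ℕ} {X : Set (EuclideanSpace ℝ (Fin d))} (h : Cospherical X) :
    Spherical X :=
  let ⟨c, ρ, hρ⟩ := h
  ⟨d, id, c, ρ, fun _ _ _ _ => rfl, hρ⟩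

/-- Main theorem: for every finite non-spherical X ⊂ ℝ^d there is m such that for every n
there is a red/blue colouring of ℝ^n (red = membership in R) with no red copy of X and no
blue progression of m collinear points with consecutive points at unit distance. -/
theorem stmt_11 (d : ℕ) (X : Set (EuclideanSpace ℝ (Fin d)))
    (hfin : X.Finite) (hX : ¬ Spherical X) :
    ∃ m : ℕ, ∀ n : ℕ, ∃ R : Set (EuclideanSpace ℝ (Fin n)),
      (¬ ∃ Y : Set (EuclideanSpace ℝ (Fin n)), IsCopy X Y ∧ Y ⊆ R) ∧
      (¬ ∃ (w : Fin m → EuclideanSpace ℝ (Fin n)) (u : EuclideanSpace ℝ (Fin n)),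
        ‖u‖ = 1 ∧ (∀ j : Fin m, ∀ hj : (j : ℕ) + 1 < m,
            w ⟨(j : ℕ) + 1, hj⟩ = w j + u) ∧
        ∀ j : Fin m, w j ∉ R) := by
  obtain ⟨m, hm⟩ := stmt_11_general fun h => hX (spherical_of_cospherical h)
  refine ⟨m, fun n => (hm _).imp fun R ⟨hred, hblue⟩ => ⟨?_, hblue⟩⟩
  rintro ⟨_, ⟨f, hf, rfl⟩, hR⟩
  exact hred ⟨f, hf, hR⟩
end
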